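/- arXiv:1301.5799 — 2 statements merged into one kernel-verified Lean document; each statement's English description precedes it below -/
import Mathlib

section
/- Let X be a Banach space and Y ⊂ X a closed subspace such that the quotient space X/Y is separable. Let i : Y → X denote the inclusion and i* : X* → Y* its adjoint. Let K be a w*-compact subset of X* and let D ⊂ i*(K) be a set induced by an r-skeleton in the compact space i*(K) (with the weak* topology). If (i*)⁻¹(D) ∩ K is dense in K, then (i*)⁻¹(D) ∩ K is induced by an r-skeleton in K (with the weak* topology). -/
/-!
Choose `x n : X` whose classes are dense in `X ⧸ Y`. A functional is determined by its restriction
to `Y` and its values at the `x n`, so `φ ↦ (i* φ, (φ (x n))ₙ)` embeds `K` into `i*(K) × ℝ^ℕ`. The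
product of the given skeleton with the identity of the metrizable space `ℝ^ℕ` is a skeleton inducing
`D × ℝ^ℕ`, and it remains to pass from a skeleton `(r s)` on a Hausdorff space, with induced set
`D`, to a compact subspace `F` in which `D ∩ F` is dense.

There one keeps only the indices `s` with `r s [F] ⊆ F`. They are closed under countable suprema
because `F` is closed. They are cofinal by a closing-off argument: starting from `s₀`, choose
`s₀ ≤ s₁ ≤ ⋯` and countable sets `Aₙ ⊆ D ∩ F` such that `r sₙ [Aₙ]` is dense in the compact
metrizable set `r sₙ [F]` and `r sₙ₊₁` fixes `Aₙ` pointwise. For `C` the closure of `⋃ Aₙ` and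
`s = sup sₙ`, the retraction `r s` fixes `C` and `r sₙ [C] = r sₙ [F]` for all `n`; by compactness
of `C` this passes to the limit, so `r s [F] = r s [C] = C ⊆ F`.
-/

open Filter Topology TopologicalSpace Set

universe u v

/-- A retractional skeleton in a topological space `K`: a family `r s : C(K, K)` of continuous
retractions indexed by an up-directed (nonempty) partially ordered set `Γ` such that
(i) each `r s` has metrizable range and the net `(r s x)` converges to `x`;
(ii) `s ≤ t` implies `r s ∘ r t = r t ∘ r s = r s`;
(iii) each strictly increasing sequence has a supremum `t` and `r t x = lim_n r (f n) x`. -/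
structure RetractionalSkeleton (K : Type u) [TopologicalSpace K] : Type (u + 1) where
  Γ : Type u
  [po : PartialOrder Γ]
  [ne : Nonempty Γ]
  directed : ∀ s t : Γ, ∃ w, s ≤ w ∧ t ≤ w
  r : Γ → C(K, K)
  isRetraction : ∀ s, ∀ x : K, r s (r s x) = r s x
  metrizable : ∀ s, MetrizableSpace ↥(Set.range (r s))
  tendsto_id : ∀ x : K, Tendsto (fun s => r s x) atTop (𝓝 x)
  comp_eq_of_le : ∀ s t : Γ, s ≤ t → ∀ x : K, r s (r t x) = r s x ∧ r t (r s x) = r s x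
  sup_seq : ∀ f : ℕ → Γ, StrictMono f → ∃ t : Γ, IsLUB (Set.range f) t ∧
    ∀ x : K, Tendsto (fun n => r (f n) x) atTop (𝓝 (r t x))

/-- The set `D(𝔰) = ⋃ s, r s [K]` induced by a retractional skeleton. -/
def RetractionalSkeleton.inducedSet {K : Type u} [TopologicalSpace K]
    (𝔰 : RetractionalSkeleton K) : Set K := ⋃ s, Set.range (𝔰.r s)

/-- `D` is induced by an r-skeleton in `K`. -/
def IsInducedByRSkeleton {K : Type u} [TopologicalSpace K] (D : Set K) : Prop :=
  ∃ 𝔰 : RetractionalSkeleton K, 𝔰.inducedSet = D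

/-- `K` has a retractional skeleton. -/
def HasRetractionalSkeleton (K : Type u) [TopologicalSpace K] : Prop :=
  Nonempty (RetractionalSkeleton K)

/-- The adjoint `i* : X* → Y*` of the inclusion `i : Y → X` of a subspace, acting on the
weak* duals: `φ ↦ φ ∘ i`. -/
noncomputable def restrictDual {X : Type u} [NormedAddCommGroup X] [NormedSpace ℝ X]
    (Y : Subspace ℝ X) (φ : WeakDual ℝ X) : WeakDual ℝ ↥Y :=
  show ↥Y →L[ℝ] ℝ from (show X →L[ℝ] ℝ from φ).comp Y.subtypeL

lemma exists_countable_subset_image_subset_closure {α β : Type*} [TopologicalSpace β]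
    (f : α → β) (S : Set α) [SeparableSpace (f '' S)] :
    ∃ A ⊆ S, A.Countable ∧ f '' S ⊆ closure (f '' A) := by
  obtain ⟨B, hBc, hBd⟩ := exists_countable_dense (f '' S)
  have hsurj : SurjOn f S (Subtype.val '' B) := Subtype.coe_image_subset _ B
  obtain ⟨A, hAS, hinj, hAB⟩ := hsurj.exists_subset_injOn_image_eq
  refine ⟨A, hAS, countable_of_injective_of_countable_image hinj ?_, ?_⟩
  · rw [hAB]
    exact hBc.image _
  · rw [hAB]
    exact Subtype.dense_iff.1 hBd

lemma exists_seq_denseRange_comp {α β : Type*} [TopologicalSpace β] [SeparableSpace β]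
    [Nonempty β] {f : α → β} (hf : Function.Surjective f) :
    ∃ x : ℕ → α, DenseRange fun n => f (x n) := by
  obtain ⟨d, hd⟩ := exists_dense_seq β
  choose x hx using fun n => hf (d n)
  exact ⟨x, by simpa only [hx] using hd⟩

lemma tendsto_subtypeVal_atTop_of_isCofinal {α : Type*} [Preorder α] {s : Set α}
    (hs : IsCofinal s) : Tendsto (Subtype.val : s → α) atTop atTop :=
  tendsto_atTop_atTop_of_monotone (Subtype.mono_coe s) fun a =>
    let ⟨b, hb, hab⟩ := hs a
    ⟨⟨b, hb⟩, hab⟩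

/-- The continuous self-map of `K` obtained from a self-map `g` of `P` by identifying `K` with the
`g`-invariant subspace `range e`. -/
noncomputable def restrictAlong {K P : Type*} [TopologicalSpace K] [TopologicalSpace P]
    {e : K → P} (he : IsEmbedding e) (g : C(P, P)) (hg : MapsTo g (range e) (range e)) :
    C(K, K) where
  toFun x := (hg (mem_range_self x)).choose
  continuous_toFun := he.continuous_iff.2 <| (g.continuous.comp he.continuous).congr fun x =>
    (hg (mem_range_self x)).choose_spec.symm

lemma apply_restrictAlong {K P : Type*} [TopologicalSpace K] [TopologicalSpace P]
    {e : K → P} (he : IsEmbedding e) (g : C(P, P)) (hg : MapsTo g (range e) (range e)) (x : K) :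
    e (restrictAlong he g hg x) = g (e x) :=
  (hg (mem_range_self x)).choose_spec

namespace RetractionalSkeleton

attribute [instance] RetractionalSkeleton.po RetractionalSkeleton.ne

variable {P : Type u} [TopologicalSpace P] (𝔰 : RetractionalSkeleton P)

/-! ### Fixed points and countable suprema -/

lemma isFixedPt_of_le {s t : 𝔰.Γ} (hst : s ≤ t) {a : P} (ha : Function.IsFixedPt (𝔰.r s) a) :
    Function.IsFixedPt (𝔰.r t) a := by
  have h := (𝔰.comp_eq_of_le s t hst a).2
  rwa [ha.eq] at h

lemma mem_inducedSet_iff {a : P} : a ∈ 𝔰.inducedSet ↔ ∃ s, Function.IsFixedPt (𝔰.r s) a := by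
  simp only [inducedSet, mem_iUnion, mem_range]
  refine exists_congr fun s => ⟨?_, fun ha => ⟨a, ha⟩⟩
  rintro ⟨y, rfl⟩
  exact 𝔰.isRetraction s y

lemma exists_subseq_tendsto_isLUB {f : ℕ → 𝔰.Γ} (hf : Monotone f) :
    ∃ (t : 𝔰.Γ) (φ : ℕ → ℕ), IsLUB (range f) t ∧
      ∀ x, Tendsto (fun n => 𝔰.r (f (φ n)) x) atTop (𝓝 (𝔰.r t x)) := by
  obtain ⟨φ, hlt | hnlt⟩ := exists_increasing_or_nonincreasing_subseq (· < ·) f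
  · obtain ⟨t, ht, hlim⟩ := 𝔰.sup_seq (f ∘ φ) fun m n => hlt m n
    refine ⟨t, φ, ?_, hlim⟩
    rwa [IsLUB, hf.upperBounds_range_comp_tendsto_atTop φ.strictMono.tendsto_atTop] at ht
  · have hconst (n : ℕ) : f (φ n) = f (φ 0) := by
      rcases n.eq_zero_or_pos with rfl | hn
      · rfl
      · exact ((hf (φ.monotone hn.le)).eq_of_not_lt (hnlt 0 n hn)).symm
    refine ⟨f (φ 0), φ, ⟨?_, fun b hb => hb (mem_range_self _)⟩, fun x => ?_⟩
    · rintro _ ⟨n, rfl⟩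
      exact (hf φ.strictMono.le_apply).trans_eq (hconst n)
    · simp only [hconst, tendsto_const_nhds]

variable {𝔰} in
lemma tendsto_of_isLUB {f : ℕ → 𝔰.Γ} (hf : Monotone f) {t : 𝔰.Γ} (ht : IsLUB (range f) t)
    (x : P) : Tendsto (fun n => 𝔰.r (f n) x) atTop (𝓝 (𝔰.r t x)) := by
  refine tendsto_of_subseq_tendsto fun ns hns => ?_
  obtain ⟨φ, -, hφ⟩ := strictMono_subseq_of_tendsto_atTop hns
  obtain ⟨t', ψ, ht', hlim⟩ := 𝔰.exists_subseq_tendsto_isLUB (hf.comp hφ.monotone)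
  rw [IsLUB, hf.upperBounds_range_comp_tendsto_atTop hφ.tendsto_atTop] at ht'
  obtain rfl : t' = t := IsLeast.unique ht' ht
  exact ⟨φ ∘ ψ, hlim x⟩

lemma bddAbove_of_countable {S : Set 𝔰.Γ} (hS : S.Countable) : BddAbove S := by
  rcases S.eq_empty_or_nonempty with rfl | hne
  · exact bddAbove_empty
  obtain ⟨s, rfl⟩ := hS.exists_eq_range hne
  choose w hleft hright using 𝔰.directed
  let f : ℕ → 𝔰.Γ := fun n => Nat.rec (s 0) (fun k v => w v (s k)) n
  have hf : Monotone f := monotone_nat_of_le_succ fun n => hleft (f n) (s n)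
  obtain ⟨t, -, ht, -⟩ := 𝔰.exists_subseq_tendsto_isLUB hf
  refine ⟨t, ?_⟩
  rintro _ ⟨n, rfl⟩
  exact (hright (f n) (s n)).trans (ht.1 (mem_range_self (n + 1)))

lemma exists_ge_forall_isFixedPt {A : Set P} (hA : A.Countable) (hAD : A ⊆ 𝔰.inducedSet)
    (s : 𝔰.Γ) : ∃ t, s ≤ t ∧ ∀ a ∈ A, Function.IsFixedPt (𝔰.r t) a := by
  choose! i hi using fun a (ha : a ∈ A) => 𝔰.mem_inducedSet_iff.1 (hAD ha)
  obtain ⟨t, ht⟩ := 𝔰.bddAbove_of_countable ((hA.image i).insert s)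
  exact ⟨t, ht (mem_insert _ _), fun a ha =>
    𝔰.isFixedPt_of_le (ht (mem_insert_of_mem _ (mem_image_of_mem i ha))) (hi a ha)⟩

variable {𝔰} in
lemma apply_mem_image_of_isLUB [T2Space P] {C : Set P} (hC : IsCompact C) {f : ℕ → 𝔰.Γ}
    (hf : Monotone f) {t : 𝔰.Γ} (ht : IsLUB (range f) t) {x : P}
    (hx : ∀ n, 𝔰.r (f n) x ∈ 𝔰.r (f n) '' C) : 𝔰.r t x ∈ 𝔰.r t '' C := by
  let T : ℕ → Set P := fun n => C ∩ 𝔰.r (f n) ⁻¹' {𝔰.r (f n) x}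
  have hT_closed (n : ℕ) : IsClosed (T n) :=
    hC.isClosed.inter (isClosed_singleton.preimage (𝔰.r (f n)).continuous)
  have hT_anti (n : ℕ) : T (n + 1) ⊆ T n := by
    rintro a ⟨haC, ha : 𝔰.r (f (n + 1)) a = 𝔰.r (f (n + 1)) x⟩
    have hcomp (y : P) := (𝔰.comp_eq_of_le _ _ (hf n.le_succ) y).1
    exact ⟨haC, show 𝔰.r (f n) a = 𝔰.r (f n) x by rw [← hcomp a, ha, hcomp x]⟩
  obtain ⟨a, ha⟩ := IsCompact.nonempty_iInter_of_sequence_nonempty_isCompact_isClosed T hT_anti hx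
    (hC.of_isClosed_subset (hT_closed 0) inter_subset_left) hT_closed
  rw [mem_iInter] at ha
  refine ⟨a, (ha 0).1, tendsto_nhds_unique (tendsto_of_isLUB hf ht a) ?_⟩
  exact (tendsto_of_isLUB hf ht x).congr fun n => (ha n).2.symm

/-! ### Indices leaving a subset invariant -/

/-- The indices `s` whose retraction restricts to a self-map of `F`; restricting a skeleton to the
subspace `F` keeps only these. -/
def invariantIndices (F : Set P) : Set 𝔰.Γ := {s | MapsTo (𝔰.r s) F F}

variable {𝔰} in
lemma mem_invariantIndices_of_isLUB {F : Set P} (hF : IsClosed F) {f : ℕ → 𝔰.Γ} (hf : Monotone f)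
    (hmem : ∀ n, f n ∈ 𝔰.invariantIndices F) {t : 𝔰.Γ} (ht : IsLUB (range f) t) :
    t ∈ 𝔰.invariantIndices F := fun x hx =>
  hF.mem_of_tendsto (tendsto_of_isLUB hf ht x) (Eventually.of_forall fun n => hmem n hx)

lemma exists_countable_image_subset_closure {F S : Set P} (hF : IsCompact F) (hSF : S ⊆ F)
    (hFS : F ⊆ closure S) (s : 𝔰.Γ) :
    ∃ A ⊆ S, A.Countable ∧ 𝔰.r s '' F ⊆ closure (𝔰.r s '' A) := by
  have := 𝔰.metrizable s
  have : MetrizableSpace (𝔰.r s '' F) :=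
    (IsEmbedding.inclusion (image_subset_range (𝔰.r s) F)).metrizableSpace
  have : CompactSpace (𝔰.r s '' F) :=
    isCompact_iff_compactSpace.1 (hF.image (𝔰.r s).continuous)
  have : SecondCountableTopology (𝔰.r s '' S) :=
    (IsEmbedding.inclusion (image_mono hSF)).secondCountableTopology
  obtain ⟨A, hAS, hA, hSA⟩ := exists_countable_subset_image_subset_closure (𝔰.r s) S
  refine ⟨A, hAS, hA, ?_⟩
  calc 𝔰.r s '' F ⊆ 𝔰.r s '' closure S := image_mono hFS
    _ ⊆ closure (𝔰.r s '' S) := image_closure_subset_closure_image (𝔰.r s).continuous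
    _ ⊆ closure (𝔰.r s '' A) := closure_minimal hSA isClosed_closure

theorem isCofinal_invariantIndices [T2Space P] {F : Set P} (hF : IsCompact F)
    (hdense : F ⊆ closure (𝔰.inducedSet ∩ F)) : IsCofinal (𝔰.invariantIndices F) := by
  intro s
  choose A hAD hA hFA using 𝔰.exists_countable_image_subset_closure hF inter_subset_right hdense
  choose succ hle hsucc using fun i =>
    𝔰.exists_ge_forall_isFixedPt (hA i) ((hAD i).trans inter_subset_left) i
  let f : ℕ → 𝔰.Γ := fun n => succ^[n] s
  have hf : Monotone f := fun _ _ h => Function.monotone_iterate_of_id_le hle h s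
  obtain ⟨t, -, ht, -⟩ := 𝔰.exists_subseq_tendsto_isLUB hf
  let C : Set P := closure (⋃ n, A (f n))
  have hCF : C ⊆ F :=
    closure_minimal (iUnion_subset fun n => (hAD (f n)).trans inter_subset_right) hF.isClosed
  have hC : IsCompact C := hF.of_isClosed_subset isClosed_closure hCF
  have hfix : ∀ a ∈ C, 𝔰.r t a = a := by
    refine closure_minimal (iUnion_subset fun n a ha => ?_)
      (isClosed_eq (𝔰.r t).continuous continuous_id)
    have hle_t : succ (f n) ≤ t :=
      (Function.iterate_succ_apply' succ n s).ge.trans (ht.1 (mem_range_self (n + 1)))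
    exact 𝔰.isFixedPt_of_le hle_t (hsucc (f n) a ha)
  have himage (n : ℕ) : 𝔰.r (f n) '' F ⊆ 𝔰.r (f n) '' C := by
    rw [image_closure_of_isCompact hC (𝔰.r (f n)).continuous.continuousOn]
    exact (hFA (f n)).trans (closure_mono (image_mono (subset_iUnion (fun n => A (f n)) n)))
  refine ⟨t, fun x hx => ?_, ht.1 (mem_range_self 0)⟩
  obtain ⟨a, haC, ha⟩ :=
    apply_mem_image_of_isLUB hC hf ht fun n => himage n (mem_image_of_mem _ hx)
  rw [← ha, hfix a haC]
  exact hCF haC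

/-! ### Constructions of skeletons -/

/-- The skeleton obtained by keeping only a cofinal set `I` of indices which is closed under suprema
of strictly increasing sequences. -/
def restrictIndex (I : Set 𝔰.Γ) (hI : IsCofinal I)
    (hsup : ∀ f : ℕ → 𝔰.Γ, StrictMono f → (∀ n, f n ∈ I) → ∀ t, IsLUB (range f) t → t ∈ I) :
    RetractionalSkeleton P where
  Γ := I
  ne := hI.nonempty.to_subtype
  directed s t := by
    obtain ⟨w, hsw, htw⟩ := 𝔰.directed s t
    obtain ⟨w', hw', hww'⟩ := hI w
    exact ⟨⟨w', hw'⟩, hsw.trans hww', htw.trans hww'⟩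
  r s := 𝔰.r s
  isRetraction s := 𝔰.isRetraction s
  metrizable s := 𝔰.metrizable s
  tendsto_id x := (𝔰.tendsto_id x).comp (tendsto_subtypeVal_atTop_of_isCofinal hI)
  comp_eq_of_le s t := 𝔰.comp_eq_of_le s t
  sup_seq f hf := by
    obtain ⟨t, ht, hlim⟩ := 𝔰.sup_seq (fun n => f n) hf
    refine ⟨⟨t, hsup _ hf (fun n => (f n).2) t ht⟩, ⟨?_, fun b hb => ht.2 ?_⟩, hlim⟩
    · rintro _ ⟨n, rfl⟩
      exact ht.1 (mem_range_self n)
    · rintro _ ⟨n, rfl⟩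
      exact hb (mem_range_self n)

lemma inducedSet_restrictIndex (I : Set 𝔰.Γ) (hI : IsCofinal I)
    (hsup : ∀ f : ℕ → 𝔰.Γ, StrictMono f → (∀ n, f n ∈ I) → ∀ t, IsLUB (range f) t → t ∈ I) :
    (𝔰.restrictIndex I hI hsup).inducedSet = 𝔰.inducedSet := by
  ext a
  rw [mem_inducedSet_iff, mem_inducedSet_iff]
  constructor
  · rintro ⟨⟨s, _⟩, hs⟩
    exact ⟨s, hs⟩
  · rintro ⟨s, hs⟩
    obtain ⟨t, ht, hst⟩ := hI s
    exact ⟨⟨t, ht⟩, 𝔰.isFixedPt_of_le hst hs⟩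

/-- The skeleton on `K` induced through an embedding `e` whose range is invariant under all
retractions. -/
noncomputable def comap {K : Type u} [TopologicalSpace K] {e : K → P} (he : IsEmbedding e)
    (hinv : ∀ s, MapsTo (𝔰.r s) (range e) (range e)) : RetractionalSkeleton K where
  Γ := 𝔰.Γ
  directed := 𝔰.directed
  r s := restrictAlong he (𝔰.r s) (hinv s)
  isRetraction s x := he.injective <| by
    simp only [apply_restrictAlong, 𝔰.isRetraction]
  metrizable s := by
    have := 𝔰.metrizable s
    have hmaps : MapsTo e (range (restrictAlong he (𝔰.r s) (hinv s))) (range (𝔰.r s)) := by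
      rintro _ ⟨x, rfl⟩
      exact ⟨e x, (apply_restrictAlong he _ (hinv s) x).symm⟩
    exact (he.restrict hmaps).metrizableSpace
  tendsto_id x := he.tendsto_nhds_iff.2 <| (𝔰.tendsto_id (e x)).congr fun s =>
    (apply_restrictAlong he _ (hinv s) x).symm
  comp_eq_of_le s t hst x := by
    obtain ⟨hleft, hright⟩ := 𝔰.comp_eq_of_le s t hst (e x)
    constructor <;> apply he.injective <;> simpa only [apply_restrictAlong]
  sup_seq f hf := by
    obtain ⟨t, ht, hlim⟩ := 𝔰.sup_seq f hf
    refine ⟨t, ht, fun x => he.tendsto_nhds_iff.2 ?_⟩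
    rw [apply_restrictAlong he]
    exact (hlim (e x)).congr fun n => (apply_restrictAlong he _ (hinv (f n)) x).symm

lemma inducedSet_comap {K : Type u} [TopologicalSpace K] {e : K → P} (he : IsEmbedding e)
    (hinv : ∀ s, MapsTo (𝔰.r s) (range e) (range e)) :
    (𝔰.comap he hinv).inducedSet = e ⁻¹' 𝔰.inducedSet := by
  ext x
  rw [mem_preimage, mem_inducedSet_iff, mem_inducedSet_iff]
  refine exists_congr fun s => he.injective.eq_iff.symm.trans ?_
  exact iff_of_eq (congrArg (· = e x) (apply_restrictAlong he _ (hinv s) x))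

end RetractionalSkeleton

namespace RetractionalSkeleton

variable {P : Type (max u v)} [TopologicalSpace P] (𝔰 : RetractionalSkeleton P)
  (M : Type v) [TopologicalSpace M] [MetrizableSpace M]

/-- The product of a skeleton with the identity of a metrizable space `M`. The universe of `M` is at
most that of `P`, since the index set of a skeleton lives in the universe of the space. -/
def prodId : RetractionalSkeleton (P × M) where
  Γ := 𝔰.Γ
  directed := 𝔰.directed
  r s := (𝔰.r s).prodMap (ContinuousMap.id M)
  isRetraction s x := Prod.ext (𝔰.isRetraction s x.1) rfl
  metrizable s := by
    have := 𝔰.metrizable s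
    have hrange : range ((𝔰.r s).prodMap (ContinuousMap.id M)) = range (𝔰.r s) ×ˢ range id :=
      range_prodMap
    exact ((Homeomorph.setCongr hrange).trans (Homeomorph.Set.prod _ _)).isEmbedding.metrizableSpace
  tendsto_id x := (𝔰.tendsto_id x.1).prodMk_nhds tendsto_const_nhds
  comp_eq_of_le s t hst x :=
    ⟨Prod.ext (𝔰.comp_eq_of_le s t hst x.1).1 rfl, Prod.ext (𝔰.comp_eq_of_le s t hst x.1).2 rfl⟩
  sup_seq f hf := by
    obtain ⟨t, ht, hlim⟩ := 𝔰.sup_seq f hf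
    exact ⟨t, ht, fun x => (hlim x.1).prodMk_nhds tendsto_const_nhds⟩

lemma inducedSet_prodId : (𝔰.prodId M).inducedSet = Prod.fst ⁻¹' 𝔰.inducedSet := by
  ext z
  rw [mem_preimage, mem_inducedSet_iff, mem_inducedSet_iff]
  exact exists_congr fun s => ⟨fun h => congrArg Prod.fst h, fun h => Prod.ext h rfl⟩

end RetractionalSkeleton

/-! ### Induced sets in compact spaces -/

namespace IsInducedByRSkeleton

theorem preimage_of_isEmbedding {K P : Type u} [TopologicalSpace K] [CompactSpace K]
    [TopologicalSpace P] [T2Space P] {D : Set P} (hD : IsInducedByRSkeleton D) {e : K → P}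
    (he : IsEmbedding e) (hdense : Dense (e ⁻¹' D)) : IsInducedByRSkeleton (e ⁻¹' D) := by
  obtain ⟨𝔰, rfl⟩ := hD
  have hF : IsCompact (range e) := isCompact_range he.continuous
  have hcofinal : IsCofinal (𝔰.invariantIndices (range e)) := by
    refine 𝔰.isCofinal_invariantIndices hF ?_
    rw [← image_preimage_eq_inter_range]
    exact he.continuous.range_subset_closure_image_dense hdense
  let 𝔱 : RetractionalSkeleton P := 𝔰.restrictIndex _ hcofinal fun _ hf hmem _ ht =>
    RetractionalSkeleton.mem_invariantIndices_of_isLUB hF.isClosed hf.monotone hmem ht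
  have hinv : ∀ s, MapsTo (𝔱.r s) (range e) (range e) := Subtype.property
  refine ⟨𝔱.comap he hinv, ?_⟩
  rw [𝔱.inducedSet_comap, 𝔰.inducedSet_restrictIndex]

theorem preimage_of_injective_prodMk {K : Type (max u v)} [TopologicalSpace K] [CompactSpace K]
    {L : Type (max u v)} [TopologicalSpace L] [T2Space L] {M : Type v} [TopologicalSpace M]
    [MetrizableSpace M] {D : Set L} (hD : IsInducedByRSkeleton D) {f : K → L} (hf : Continuous f)
    {g : K → M} (hg : Continuous g) (hinj : Function.Injective fun x => (f x, g x))
    (hdense : Dense (f ⁻¹' D)) : IsInducedByRSkeleton (f ⁻¹' D) := by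
  obtain ⟨𝔰, rfl⟩ := hD
  have he : IsEmbedding fun x => (f x, g x) :=
    ((hf.prodMk hg).isClosedEmbedding hinj).isEmbedding
  exact preimage_of_isEmbedding ⟨𝔰.prodId M, 𝔰.inducedSet_prodId M⟩ he hdense

end IsInducedByRSkeleton

/-! ### The restriction map on weak* duals -/

section RestrictDual

variable {X : Type u} [NormedAddCommGroup X] [NormedSpace ℝ X] (Y : Subspace ℝ X)

lemma continuous_restrictDual : Continuous (restrictDual Y) :=
  WeakDual.continuous_of_continuous_eval fun y => WeakDual.eval_continuous (y : X)

lemma injective_restrictDual_prodMk_eval {ι : Type*} {x : ι → X}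
    (hx : DenseRange fun i => Y.mkQ (x i)) :
    Function.Injective fun φ : WeakDual ℝ X => (restrictDual Y φ, fun i => φ (x i)) := by
  intro φ ψ h
  obtain ⟨hY, hval⟩ := Prod.ext_iff.1 h
  have hdense : Dense (Y.mkQ ⁻¹' range fun i => Y.mkQ (x i)) := hx.preimage Y.isOpenMap_mkQ
  refine DFunLike.coe_injective
    (Continuous.ext_on hdense (map_continuous φ) (map_continuous ψ) ?_)
  rintro z ⟨i, hi⟩
  have hmem : z - x i ∈ Y := (Submodule.Quotient.eq Y).1 hi.symm
  have hsub : φ (z - x i) = ψ (z - x i) := DFunLike.congr_fun hY (⟨z - x i, hmem⟩ : Y)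
  have hxi : φ (x i) = ψ (x i) := congrFun hval i
  rwa [map_sub, map_sub, hxi, sub_left_inj] at hsub

end RestrictDual

theorem inducedByRSkeleton_of_separable_quotient_general {X : Type u} [NormedAddCommGroup X]
    [NormedSpace ℝ X] (Y : Subspace ℝ X) (hsep : SeparableSpace (X ⧸ Y))
    {K : Set (WeakDual ℝ X)} (hK : IsCompact K) {D : Set (WeakDual ℝ ↥Y)}
    (hD : IsInducedByRSkeleton (Subtype.val ⁻¹' D : Set ↥(restrictDual Y '' K)))
    (hdense : Dense (Subtype.val ⁻¹' (restrictDual Y ⁻¹' D) : Set ↥K)) :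
    IsInducedByRSkeleton (Subtype.val ⁻¹' (restrictDual Y ⁻¹' D) : Set ↥K) := by
  have : CompactSpace K := isCompact_iff_compactSpace.1 hK
  obtain ⟨x, hx⟩ := exists_seq_denseRange_comp Y.mkQ_surjective
  have hrestrict : Continuous ((mapsTo_image (restrictDual Y) K).restrict) :=
    (continuous_restrictDual Y).restrict _
  have heval : Continuous fun (φ : K) n => φ.1 (x n) :=
    continuous_pi fun n => (WeakDual.eval_continuous (x n)).comp continuous_subtype_val
  refine hD.preimage_of_injective_prodMk hrestrict heval (fun φ ψ h => ?_) hdense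
  refine Subtype.ext (injective_restrictDual_prodMk_eval Y hx ?_)
  exact congrArg (Prod.map Subtype.val id) h

/-- Let `X` be a Banach space, `Y ⊆ X` a closed subspace with `X/Y` separable, `i : Y → X`
the inclusion, `K ⊆ X*` weak*-compact, and `D ⊆ i*(K)` induced by an r-skeleton in `i*(K)`.
If `(i*)⁻¹(D) ∩ K` is dense in `K`, then `(i*)⁻¹(D) ∩ K` is induced by an r-skeleton
in `K`. -/
theorem inducedByRSkeleton_of_separable_quotient (X : Type u) [NormedAddCommGroup X]
    [NormedSpace ℝ X] [CompleteSpace X]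
    (Y : Subspace ℝ X) (hY : IsClosed (Y : Set X)) (hsep : SeparableSpace (X ⧸ Y))
    (K : Set (WeakDual ℝ X)) (hK : IsCompact K)
    (D : Set (WeakDual ℝ ↥Y)) (hDsub : D ⊆ restrictDual Y '' K)
    (hD : IsInducedByRSkeleton (Subtype.val ⁻¹' D : Set ↥(restrictDual Y '' K)))
    (hdense : Dense (Subtype.val ⁻¹' (restrictDual Y ⁻¹' D) : Set ↥K)) :
    IsInducedByRSkeleton (Subtype.val ⁻¹' (restrictDual Y ⁻¹' D) : Set ↥K) := by
  exact inducedByRSkeleton_of_separable_quotient_general Y hsep hK hD hdense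
end

section
/- Let X be a Banach space such that the ordinal interval [0,ω₁] embeds homeomorphically into (B_{X*}, w*). Then for every point e ∈ X and every ε > 0 there exists a w*-compact convex set L ⊂ {x* ∈ X* : x*(e) = 0} ∩ εB_{X*} that does not have a retractional skeleton (with respect to the weak* topology). -/
/-!
Translating and rescaling the embedding gives a continuous `g : [0, ω₁] → X*` with small values
that vanishes exactly at `ω₁`. Since `ω₁` has uncountable cofinality, any countably many functionals
vanish along a tail of `g`, and for a suitable `δ < ω₁` none of the closed convex hulls of
`g '' [δ, γ]` with `γ < ω₁` contains `0`. Let `K` be the closed convex hull of `g '' [δ, ω₁]`, and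
let `L` be the join of `K` with a compact region above the parabola `y = x ^ 2` in a plane that is
biorthogonal to functionals vanishing on `K`.

Let `D` be the set induced by a retractional skeleton of `L`. It is closed under closures of its
countable subsets, it meets every nonempty fibre of a continuous map from `L` to a first countable
Hausdorff space, and a subset of `D` closed under closures of its countable subsets contains every
point of `D` in its closure.
The points `(a, a ^ 2)` of the parabola are such fibres, so they lie in `D`, and hence so does their
limit `0` as `a → 0`. On the other hand, the points of `D` that lie in the hull of some
`g '' [δ, γ]` with `γ < ω₁` form a subset of `D` of this kind that misses `0`, and yet `0` lies in
its closure: maximising over `K` a functional subject to finitely many others being zero yields a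
fibre contained in one of those hulls.
-/

open Filter Topology TopologicalSpace Set

universe u v

/-- The closed unit ball of the dual of `X`, as a subset of the weak* dual `(X*, w*)`. -/
def dualBall (X : Type u) [NormedAddCommGroup X] [NormedSpace ℝ X] : Set (WeakDual ℝ X) :=
  {φ | ∀ x : X, |φ x| ≤ ‖x‖}

/-- The first uncountable ordinal `ω₁`. -/
noncomputable def omega1 : Ordinal.{0} := (Cardinal.aleph 1).ord

/-- The ordinal segment `[0, ω₁]` with its (order-induced) topology. -/
abbrev OrdinalSegmentOmega1 : Type 1 := ↥(Set.Iic omega1)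

/-! ### Countably closed sets -/

/-- A set is countably closed if it contains the closures of all of its countable subsets. -/
def IsCountablyClosed {K : Type*} [TopologicalSpace K] (A : Set K) : Prop :=
  ∀ C ⊆ A, C.Countable → closure C ⊆ A

namespace IsCountablyClosed

variable {K Y : Type*} [TopologicalSpace K] [TopologicalSpace Y] {A B : Set K}

lemma inter (hA : IsCountablyClosed A) (hB : IsCountablyClosed B) : IsCountablyClosed (A ∩ B) :=
  fun C hC hc => subset_inter (hA C (hC.trans inter_subset_left) hc)
    (hB C (hC.trans inter_subset_right) hc)

lemma preimage {A : Set Y} (hA : IsCountablyClosed A) {f : K → Y} (hf : Continuous f) :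
    IsCountablyClosed (f ⁻¹' A) := fun C hC hc _ hx =>
  hA (f '' C) (image_subset_iff.2 hC) (hc.image f) (hf.closure_preimage_subset _ <|
    closure_mono (subset_preimage_image f C) hx)

lemma mem_of_tendsto {ι : Type*} [Countable ι] (hA : IsCountablyClosed A) {l : Filter ι} [l.NeBot]
    {x : ι → K} {y : K} (hx : ∀ i, x i ∈ A) (hxy : Tendsto x l (𝓝 y)) : y ∈ A :=
  hA (range x) (range_subset_iff.2 hx) (countable_range x) <|
    mem_closure_of_tendsto hxy (.of_forall mem_range_self)

lemma isClosed_image [CompactSpace K] [T2Space Y] [SequentialSpace Y] (hA : IsCountablyClosed A)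
    {f : K → Y} (hf : Continuous f) : IsClosed (f '' A) := by
  refine IsSeqClosed.isClosed fun y z hy hyz => ?_
  choose a haA hay using hy
  have hclosed : IsClosed (f '' closure (range a)) :=
    (isClosed_closure.isCompact.image hf).isClosed
  have hz : z ∈ f '' closure (range a) := hclosed.mem_of_tendsto hyz <|
    .of_forall fun n => ⟨a n, subset_closure (mem_range_self n), hay n⟩
  exact image_mono (hA _ (range_subset_iff.2 haA) (countable_range a)) hz

end IsCountablyClosed

/-! ### Sets induced by retractional skeletons -/

lemma exists_monotone_forall_le {α : Type*} [Preorder α] [IsDirectedOrder α] (N : ℕ → α) :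
    ∃ v : ℕ → α, Monotone v ∧ ∀ n, N n ≤ v n := by
  choose w hleft hright using fun a b : α => exists_ge_ge a b
  refine ⟨fun n => n.rec (N 0) fun k a => w a (N (k + 1)),
    monotone_nat_of_le_succ fun n => hleft _ _, fun n => ?_⟩
  cases n with
  | zero => exact le_rfl
  | succ k => exact hright _ _

namespace RetractionalSkeleton

attribute [local instance] RetractionalSkeleton.po RetractionalSkeleton.ne

variable {K : Type u} [TopologicalSpace K] (𝔰 : RetractionalSkeleton K)

instance : IsDirectedOrder 𝔰.Γ := ⟨𝔰.directed⟩

variable {𝔰}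

lemma mem_inducedSet {x : K} : x ∈ 𝔰.inducedSet ↔ ∃ s, 𝔰.r s x = x := by
  simp only [inducedSet, mem_iUnion, mem_range]
  refine exists_congr fun s => ⟨?_, fun h => ⟨x, h⟩⟩
  rintro ⟨y, rfl⟩
  exact 𝔰.isRetraction s y

lemma eq_self_of_le {s t : 𝔰.Γ} (hst : s ≤ t) {x : K} (hx : 𝔰.r s x = x) : 𝔰.r t x = x := by
  simpa only [hx] using (𝔰.comp_eq_of_le s t hst x).2

/-- Ramsey's theorem yields a subsequence that is strictly increasing, where axiom (iii) applies,
or constant. -/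
lemma exists_forall_le_tendsto_subseq {f : ℕ → 𝔰.Γ} (hf : Monotone f) :
    ∃ (t : 𝔰.Γ) (φ : ℕ ↪o ℕ), (∀ n, f n ≤ t) ∧
      ∀ x, Tendsto (fun n => 𝔰.r (f (φ n)) x) atTop (𝓝 (𝔰.r t x)) := by
  obtain ⟨φ, hlt | hnlt⟩ := exists_increasing_or_nonincreasing_subseq (· < ·) f
  · obtain ⟨t, ht, hlim⟩ := 𝔰.sup_seq (fun n => f (φ n)) fun m n => hlt m n
    exact ⟨t, φ, fun n => (hf φ.strictMono.le_apply).trans (ht.1 (mem_range_self n)), hlim⟩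
  · have hconst : ∀ n, f (φ n) = f (φ 0) := fun n => by
      rcases n.eq_zero_or_pos with rfl | hn
      · rfl
      · exact ((hf (φ.monotone hn.le)).eq_of_not_lt (hnlt 0 n hn)).symm
    refine ⟨f (φ 0), φ, fun n => (hf φ.strictMono.le_apply).trans (hconst n).le, fun x => ?_⟩
    simp only [hconst, tendsto_const_nhds]

lemma bddAbove_range (N : ℕ → 𝔰.Γ) : BddAbove (range N) := by
  obtain ⟨v, hv, hNv⟩ := exists_monotone_forall_le N
  obtain ⟨t, -, ht, -⟩ := exists_forall_le_tendsto_subseq hv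
  exact ⟨t, forall_mem_range.2 fun n => (hNv n).trans (ht n)⟩

lemma isCountablyClosed_inducedSet [T2Space K] : IsCountablyClosed 𝔰.inducedSet := by
  intro C hC hc
  rcases C.eq_empty_or_nonempty with rfl | hne
  · simp only [closure_empty, empty_subset]
  obtain ⟨x, rfl⟩ := hc.exists_eq_range hne
  choose N hN using fun n => mem_inducedSet.1 (hC (mem_range_self n))
  obtain ⟨t, ht⟩ := bddAbove_range N
  have hfix : range x ⊆ {y | 𝔰.r t y = y} :=
    range_subset_iff.2 fun n => eq_self_of_le (ht (mem_range_self n)) (hN n)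
  exact (closure_minimal hfix (isClosed_eq (𝔰.r t).continuous continuous_id)).trans
    fun y hy => mem_inducedSet.2 ⟨t, hy⟩

/-- The witness is `𝔰.r t z`, with `t` the supremum of a sequence of indices `s` along which
`φ (𝔰.r s z)` already converges to `φ z`. -/
lemma exists_mem_inducedSet_eq {Y : Type*} [TopologicalSpace Y] [FirstCountableTopology Y]
    [T2Space Y] (𝔰 : RetractionalSkeleton K) {φ : K → Y} (hφ : Continuous φ) (z : K) :
    ∃ w ∈ 𝔰.inducedSet, φ w = φ z := by
  obtain ⟨V, hV⟩ := (𝓝 (φ z)).exists_antitone_basis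
  have hnear : ∀ n, ∃ s, ∀ s' ≥ s, φ (𝔰.r s' z) ∈ V n := fun n =>
    eventually_atTop.1 (((hφ.tendsto z).comp (𝔰.tendsto_id z)).eventually_mem (hV.mem n))
  choose N hN using hnear
  obtain ⟨v, hv, hNv⟩ := exists_monotone_forall_le N
  obtain ⟨t, ψ, -, hlim⟩ := exists_forall_le_tendsto_subseq hv
  have hz : Tendsto (fun n => φ (𝔰.r (v n) z)) atTop (𝓝 (φ z)) :=
    hV.tendsto fun n => hN n _ (hNv n)
  exact ⟨𝔰.r t z, mem_inducedSet.2 ⟨t, 𝔰.isRetraction t z⟩, tendsto_nhds_unique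
    ((hφ.tendsto _).comp (hlim z)) (hz.comp ψ.strictMono.tendsto_atTop)⟩

lemma exists_mem_eq_of_mem_closure [CompactSpace K] {A : Set K} (hA : IsCountablyClosed A) {o : K}
    (hoA : o ∈ closure A) {s : 𝔰.Γ} (hs : 𝔰.r s o = o) : ∃ d ∈ A, 𝔰.r s d = o := by
  have := 𝔰.metrizable s
  have hcont : Continuous (rangeFactorization (𝔰.r s)) :=
    (𝔰.r s).continuous.codRestrict mem_range_self
  obtain ⟨d, hd, hdo⟩ := (hA.isClosed_image hcont).closure_subset <|
    image_closure_subset_closure_image hcont (mem_image_of_mem _ hoA)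
  exact ⟨d, hd, (congrArg Subtype.val hdo).trans hs⟩

/-- Choose `s₀ ≤ s₁ ≤ ⋯` fixing `o` and points `d n` of `A` fixed by `𝔰.r (s (n + 1))` with
`𝔰.r (s n) (d n) = o`. A cluster point of `d` is fixed by `𝔰.r t`, where `t` bounds all `s n`,
and mapped to `o` by every `𝔰.r (s n)`, hence also by `𝔰.r t`. -/
lemma mem_of_mem_closure [T2Space K] [CompactSpace K] {A : Set K} (hAD : A ⊆ 𝔰.inducedSet)
    (hA : IsCountablyClosed A) {o : K} (ho : o ∈ 𝔰.inducedSet) (hoA : o ∈ closure A) :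
    o ∈ A := by
  obtain ⟨s₀, hs₀⟩ := mem_inducedSet.1 ho
  have hstep : ∀ s : {s // 𝔰.r s o = o}, ∃ d ∈ A, 𝔰.r s d = o ∧
      ∃ s' : {s // 𝔰.r s o = o}, s ≤ s' ∧ 𝔰.r s' d = d := by
    rintro ⟨s, hs⟩
    obtain ⟨d, hd, hdo⟩ := exists_mem_eq_of_mem_closure hA hoA hs
    obtain ⟨u, hu⟩ := mem_inducedSet.1 (hAD hd)
    obtain ⟨s', hss', hus'⟩ := 𝔰.directed s u
    exact ⟨d, hd, hdo, ⟨s', eq_self_of_le hss' hs⟩, hss', eq_self_of_le hus' hu⟩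
  choose d hdA hdo next hle hfix using hstep
  let σ : ℕ → {s // 𝔰.r s o = o} := fun n => next^[n] ⟨s₀, hs₀⟩
  have hσ_succ : ∀ n, σ (n + 1) = next (σ n) := fun n => Function.iterate_succ_apply' next n _
  have hσ : Monotone σ := monotone_nat_of_le_succ fun n => (hσ_succ n) ▸ hle (σ n)
  obtain ⟨t, φ, ht, hlim⟩ := exists_forall_le_tendsto_subseq (f := fun n => (σ n).1) hσ
  let y : K := ((hyperfilter ℕ).map fun n => d (σ n)).lim
  have hy : Tendsto (fun n => d (σ n)) (hyperfilter ℕ) (𝓝 y) := Ultrafilter.le_nhds_lim _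
  have hy_map : ∀ m, 𝔰.r (σ m) y = o := fun m => by
    refine tendsto_nhds_unique (((𝔰.r (σ m)).continuous.tendsto y).comp hy)
      (tendsto_const_nhds.congr' ?_)
    filter_upwards [Nat.hyperfilter_le_atTop (eventually_ge_atTop m)] with n hmn
    rw [Function.comp_apply, ← (𝔰.comp_eq_of_le _ _ (hσ hmn) _).1, hdo, (σ m).2]
  have hy_fix : 𝔰.r t y = y := by
    refine tendsto_nhds_unique (((𝔰.r t).continuous.tendsto y).comp hy) (hy.congr fun n => ?_)
    exact (eq_self_of_le (ht (n + 1)) (hσ_succ n ▸ hfix (σ n))).symm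
  have hy_eq : 𝔰.r t y = o :=
    tendsto_nhds_unique (hlim y) (tendsto_const_nhds.congr fun n => (hy_map (φ n)).symm)
  rw [← hy_eq, hy_fix]
  exact hA.mem_of_tendsto (fun n => hdA (σ n)) hy

end RetractionalSkeleton

open scoped Cardinal

/-! ### Linear orders with a top element of uncountable cofinality -/

section Cofinality

variable {T : Type*} [LinearOrder T] [OrderTop T]

lemma exists_lt_top_forall_lt (hT : ℵ₀ < Order.cof (Iio (⊤ : T))) {s : Set T} (hs : s.Countable)
    (hs_top : ∀ a ∈ s, a < ⊤) : ∃ b < ⊤, ∀ a ∈ s, a < b := by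
  by_contra! h
  let s' : Set (Iio (⊤ : T)) := (↑) ⁻¹' s
  have hcof : IsCofinal s' := fun ⟨b, hb⟩ => by
    obtain ⟨a, ha, hba⟩ := h b hb
    exact ⟨⟨a, hs_top a ha⟩, ha, hba⟩
  have hs' : s'.Countable := hs.preimage Subtype.val_injective
  exact hT.not_ge ((Order.cof_le hcof).trans hs'.le_aleph0)

variable [TopologicalSpace T] [OrderTopology T]

lemma exists_mem_Ico_forall_ge_eq_top (hT : ℵ₀ < Order.cof (Iio (⊤ : T))) {Y : Type*}
    [TopologicalSpace Y] [FirstCountableTopology Y] [T1Space Y] {h : T → Y} (hh : Continuous h)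
    {a : T} (ha : a < ⊤) : ∃ b ∈ Ico a ⊤, ∀ ξ ≥ b, h ξ = h ⊤ := by
  obtain ⟨V, hV⟩ := (𝓝 (h ⊤)).exists_antitone_basis
  have hnear : ∀ n, ∃ l < ⊤, ∀ ξ, l < ξ → h ξ ∈ V n := fun n => by
    obtain ⟨l, hl, hsub⟩ :=
      exists_Ioc_subset_of_mem_nhds (hh.continuousAt.preimage_mem_nhds (hV.mem n)) ⟨a, ha⟩
    exact ⟨l, hl, fun ξ hξ => hsub ⟨hξ, le_top⟩⟩
  choose l hl hmem using hnear
  obtain ⟨b, hb, hlb⟩ := exists_lt_top_forall_lt hT ((countable_range l).insert a)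
    (forall_mem_insert.2 ⟨ha, forall_mem_range.2 hl⟩)
  refine ⟨b, ⟨(hlb a (mem_insert _ _)).le, hb⟩, fun ξ hξ => ?_⟩
  have hinter : h ξ ∈ ⋂ n, ⋂ (_ : True), V n := mem_iInter₂.2 fun n _ =>
    hmem n ξ ((hlb _ (mem_insert_of_mem _ (mem_range_self n))).trans_le hξ)
  rwa [biInter_basis_nhds hV.toHasBasis] at hinter

end Cofinality

lemma aleph0_lt_cof_Iio_top_ordinalSegmentOmega1 :
    ℵ₀ < Order.cof (Iio (⊤ : OrdinalSegmentOmega1)) := by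
  let toIio : Iio (⊤ : OrdinalSegmentOmega1) ≃o Iio omega1 :=
    { toFun := fun ξ => ⟨ξ, ξ.2⟩
      invFun := fun ξ => ⟨⟨ξ, (mem_Iio.1 ξ.2).le⟩, ξ.2⟩
      left_inv := fun _ => rfl
      right_inv := fun _ => rfl
      map_rel_iff' := Iff.rfl }
  rw [toIio.cof_congr, Ordinal.cof_Iio, ← Ordinal.lift_cof, omega1,
    Cardinal.isRegular_aleph_one.cof_ord, Cardinal.aleph0_lt_lift]
  exact Cardinal.aleph0_lt_aleph_one

/-! ### Closed convex hulls of arcs -/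

section ArcHull

variable {E : Type*} [AddCommGroup E] [Module ℝ E] [TopologicalSpace E]

lemma isCompact_convexJoin [ContinuousAdd E] [ContinuousSMul ℝ E] {s t : Set E}
    (hs : IsCompact s) (ht : IsCompact t) : IsCompact (convexJoin ℝ s t) := by
  have himage : convexJoin ℝ s t = (fun w : (E × E) × ℝ => (1 - w.2) • w.1.1 + w.2 • w.1.2) ''
      ((s ×ˢ t) ×ˢ Icc 0 1) := by
    ext z
    simp only [mem_convexJoin, segment_eq_image, mem_image, mem_prod, Prod.exists]
    constructor
    · rintro ⟨a, ha, b, hb, θ, hθ, rfl⟩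
      exact ⟨a, b, θ, ⟨⟨ha, hb⟩, hθ⟩, rfl⟩
    · rintro ⟨a, b, θ, ⟨⟨ha, hb⟩, hθ⟩, rfl⟩
      exact ⟨a, ha, b, hb, θ, hθ, rfl⟩
  rw [himage]
  exact ((hs.prod ht).prod isCompact_Icc).image (by fun_prop)

variable {T : Type*} [LinearOrder T] {g : T → E}

/-- The closed convex hull of the arc `{g ξ : a ≤ ξ ≤ b}`. -/
def arcHull (g : T → E) (a b : T) : Set E := closedConvexHull ℝ (g '' Icc a b)

lemma arcHull_mono {a a' b b' : T} (ha : a' ≤ a) (hb : b ≤ b') :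
    arcHull g a b ⊆ arcHull g a' b' :=
  (closedConvexHull ℝ).monotone (image_mono (Icc_subset_Icc ha hb))

lemma arcHull_subset {a b : T} {B : Set E} (hB : Convex ℝ B) (hBc : IsClosed B)
    (h : ∀ ξ ∈ Icc a b, g ξ ∈ B) : arcHull g a b ⊆ B :=
  closedConvexHull_min (image_subset_iff.2 h) hB hBc

lemma mem_arcHull {a b ξ : T} (h : ξ ∈ Icc a b) : g ξ ∈ arcHull g a b :=
  subset_closedConvexHull (mem_image_of_mem g h)

lemma isClosed_arcHull {a b : T} : IsClosed (arcHull g a b) := isClosed_closedConvexHull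

lemma convex_arcHull {a b : T} : Convex ℝ (arcHull g a b) := convex_closedConvexHull

lemma apply_eq_of_mem_arcHull {V : Type*} [AddCommGroup V] [Module ℝ V] [TopologicalSpace V]
    [T1Space V] (f : E →L[ℝ] V) {a b : T} {v : V} (h : ∀ ξ ∈ Icc a b, f (g ξ) = v) {q : E}
    (hq : q ∈ arcHull g a b) : f q = v :=
  arcHull_subset ((convex_singleton v).is_linear_preimage f.isLinear)
    (isClosed_singleton.preimage f.continuous) h hq

lemma isCompact_arcHull (hg : IsCompact (closedConvexHull ℝ (range g))) (a b : T) :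
    IsCompact (arcHull g a b) :=
  hg.of_isClosed_subset isClosed_arcHull ((closedConvexHull ℝ).monotone (image_subset_range g _))

lemma arcHull_subset_convexJoin [ContinuousAdd E] [ContinuousSMul ℝ E] [T2Space E]
    (hg : IsCompact (closedConvexHull ℝ (range g))) {a b c : T} (hab : a ≤ b) (hbc : b ≤ c) :
    arcHull g a c ⊆ convexJoin ℝ (arcHull g a b) (arcHull g b c) := by
  refine arcHull_subset (convex_arcHull.convexJoin convex_arcHull)
    (isCompact_convexJoin (isCompact_arcHull hg a b) (isCompact_arcHull hg b c)).isClosed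
    fun ξ hξ => ?_
  rcases le_total ξ b with h | h
  · exact subset_convexJoin_left ⟨g b, mem_arcHull ⟨le_rfl, hbc⟩⟩ (mem_arcHull ⟨hξ.1, h⟩)
  · exact subset_convexJoin_right ⟨g b, mem_arcHull ⟨hab, le_rfl⟩⟩ (mem_arcHull ⟨h, hξ.2⟩)

/-- The union of the closed convex hulls of the arcs `[δ, γ]` with `γ < ⊤`. -/
def boundedArcHull [OrderTop T] (g : T → E) (δ : T) : Set E := ⋃ γ < ⊤, arcHull g δ γ

lemma mem_boundedArcHull [OrderTop T] {δ : T} {q : E} :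
    q ∈ boundedArcHull g δ ↔ ∃ γ < ⊤, q ∈ arcHull g δ γ := by
  simp only [boundedArcHull, mem_iUnion, exists_prop]

lemma isCountablyClosed_boundedArcHull [OrderTop T] (hT : ℵ₀ < Order.cof (Iio (⊤ : T))) {δ : T} :
    IsCountablyClosed (boundedArcHull g δ) := by
  intro C hC hc
  choose! γ hγ hmem using fun q (hq : q ∈ C) => mem_boundedArcHull.1 (hC hq)
  obtain ⟨b, hb, hγb⟩ := exists_lt_top_forall_lt hT (hc.image γ) (forall_mem_image.2 hγ)
  have hCb : C ⊆ arcHull g δ b := fun q hq =>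
    arcHull_mono le_rfl (hγb _ (mem_image_of_mem γ hq)).le (hmem q hq)
  exact (closure_minimal hCb isClosed_arcHull).trans fun q hq => mem_boundedArcHull.2 ⟨b, hb, hq⟩

lemma exists_mem_Ico_forall_ge_apply_eq_zero [OrderTop T] [TopologicalSpace T] [OrderTopology T]
    (hT : ℵ₀ < Order.cof (Iio (⊤ : T))) (hg : Continuous g) (hg_top : g ⊤ = 0)
    {A : Set (StrongDual ℝ E)} (hA : A.Countable) {a : T} (ha : a < ⊤) :
    ∃ b ∈ Ico a ⊤, ∀ ξ ≥ b, ∀ f ∈ A, f (g ξ) = 0 := by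
  have := hA.to_subtype
  obtain ⟨b, hb, hconst⟩ := exists_mem_Ico_forall_ge_eq_top hT
    (h := fun ξ (f : A) => f.1 (g ξ)) (by fun_prop) ha
  refine ⟨b, hb, fun ξ hξ f hf => (congrFun (hconst ξ hξ) ⟨f, hf⟩).trans ?_⟩
  rw [hg_top, map_zero]

end ArcHull

section SeparatingDual

variable {E : Type*} [AddCommGroup E] [Module ℝ E] [TopologicalSpace E] [SeparatingDual ℝ E]

lemma exists_mem_nhds_zero_notMem_closedConvexHull {p : E} (hp : p ≠ 0) :
    ∃ U ∈ 𝓝 p, (0 : E) ∉ closedConvexHull ℝ U := by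
  obtain ⟨f, hf⟩ := SeparatingDual.exists_eq_one (R := ℝ) hp
  refine ⟨{q | 1 / 2 ≤ f q}, ?_, fun h0 => ?_⟩
  · filter_upwards [f.continuous.continuousAt.eventually_const_lt
      (show (1 / 2 : ℝ) < f p by rw [hf]; norm_num)] with q hq using hq.le
  · have h : (1 / 2 : ℝ) ≤ f 0 := closedConvexHull_min subset_rfl
      (convex_halfSpace_ge f.isLinear _) (isClosed_le continuous_const f.continuous) h0
    norm_num at h

lemma exists_finset_forall_eq_zero_imp_mem {L U : Set E} (hL : IsCompact L) (hU : U ∈ 𝓝 0) :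
    ∃ F : Finset (StrongDual ℝ E), ∀ q ∈ L, (∀ f ∈ F, f q = 0) → q ∈ U := by
  obtain ⟨F, hF⟩ := (hL.diff isOpen_interior).elim_finite_subfamily_closed
    (fun f : StrongDual ℝ E => {q | f q = 0})
    (fun f => isClosed_eq f.continuous continuous_const) <| by
      rw [eq_empty_iff_forall_notMem]
      rintro q ⟨hq, hq0⟩
      have hq_ne : q ≠ 0 := by
        rintro rfl
        exact hq.2 (mem_interior_iff_mem_nhds.2 hU)
      obtain ⟨f, hf⟩ := SeparatingDual.exists_ne_zero (R := ℝ) hq_ne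
      exact hf (mem_iInter.1 hq0 f)
  refine ⟨F, fun q hq hq0 => by_contra fun hqU => ?_⟩
  exact (hF.subset ⟨⟨hq, fun h => hqU (interior_subset h)⟩, mem_iInter₂.2 hq0⟩ : q ∈ (∅ : Set E))

variable {T : Type*} [LinearOrder T] [OrderTop T] [TopologicalSpace T] [OrderTopology T] {g : T → E}

/-- Consecutive arcs of an increasing sequence converge to the value of `g` at its supremum, and a
nonzero point has a neighbourhood whose closed convex hull misses `0`. -/
lemma exists_zero_notMem_arcHull_succ [WellFoundedLT T] (hg : Continuous g)
    (hg_ne : ∀ ξ < ⊤, g ξ ≠ 0) {w : ℕ → T} (hw : Monotone w) {b : T} (hb : b < ⊤)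
    (hwb : ∀ n, w n ≤ b) : ∃ n, 0 ∉ arcHull g (w n) (w (n + 1)) := by
  have hb_upper : b ∈ upperBounds (range w) := forall_mem_range.2 hwb
  obtain ⟨c, hc, hc_min⟩ := wellFounded_lt.has_min _ ⟨b, hb_upper⟩
  have hc_lub : IsLUB (range w) c := ⟨hc, fun y hy => not_lt.1 (hc_min y hy)⟩
  have hlim := tendsto_atTop_isLUB hw hc_lub
  obtain ⟨U, hU, h0U⟩ := exists_mem_nhds_zero_notMem_closedConvexHull
    (hg_ne c ((hc_lub.2 hb_upper).trans_lt hb))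
  obtain ⟨n, hn⟩ := ((hlim.Icc (hlim.comp (tendsto_add_atTop_nat 1))).eventually
    (eventually_smallSets.2 ⟨_, hg.continuousAt.preimage_mem_nhds hU, fun _ h => h⟩)).exists
  exact ⟨n, fun h => h0U ((closedConvexHull ℝ).monotone (image_subset_iff.2 hn) h)⟩

lemma exists_zero_notMem_boundedArcHull [WellFoundedLT T] (hT : ℵ₀ < Order.cof (Iio (⊤ : T)))
    (hg : Continuous g) (hg_ne : ∀ ξ < ⊤, g ξ ≠ 0) {a : T} (ha : a < ⊤) :
    ∃ δ ∈ Ico a ⊤, 0 ∉ boundedArcHull g δ := by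
  by_contra! hcon
  have hstep : ∀ δ : Ico a ⊤, ∃ γ : Ico a ⊤, δ ≤ γ ∧ 0 ∈ arcHull g δ.1 γ.1 := by
    rintro ⟨δ, hδ⟩
    obtain ⟨γ, hγ, h0⟩ := mem_boundedArcHull.1 (hcon δ hδ)
    exact ⟨⟨max δ γ, hδ.1.trans (le_max_left _ _), max_lt hδ.2 hγ⟩, le_max_left _ _,
      arcHull_mono le_rfl (le_max_right _ _) h0⟩
  choose next hle hzero using hstep
  let w : ℕ → Ico a ⊤ := fun n => next^[n] ⟨a, le_rfl, ha⟩
  have hw_succ : ∀ n, w (n + 1) = next (w n) := fun n => Function.iterate_succ_apply' next n _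
  have hw : Monotone w := monotone_nat_of_le_succ fun n => hw_succ n ▸ hle (w n)
  obtain ⟨b, hb, hwb⟩ := exists_lt_top_forall_lt hT (countable_range fun n => (w n).1)
    (forall_mem_range.2 fun n => (w n).2.2)
  obtain ⟨n, hn⟩ := exists_zero_notMem_arcHull_succ hg hg_ne
    (w := fun n => (w n).1) hw hb fun n => (hwb _ (mem_range_self n)).le
  exact hn (hw_succ n ▸ hzero (w n))

variable [ContinuousAdd E] [ContinuousSMul ℝ E]

/-- The hull of a far tail is annihilated by `A` and by `f`, so a point of `arcHull g δ ⊤` that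
annihilates `A` and maximises `f`, with a positive maximum, gives it no weight. -/
lemma exists_forall_eq_imp_mem_boundedArcHull (hT : ℵ₀ < Order.cof (Iio (⊤ : T)))
    (hg : Continuous g) (hg_top : g ⊤ = 0) (hg_ne : ∀ ξ < ⊤, g ξ ≠ 0)
    (hg_compact : IsCompact (closedConvexHull ℝ (range g))) {δ : T} (hδ : δ < ⊤)
    {A : Set (StrongDual ℝ E)} (hA : A.Countable) :
    ∃ f : StrongDual ℝ E, ∃ z ∈ arcHull g δ ⊤, (∀ a ∈ A, a z = 0) ∧
      ∀ q ∈ arcHull g δ ⊤, (∀ a ∈ A, a q = 0) → f q = f z → q ∈ boundedArcHull g δ := by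
  have : T2Space E := SeparatingDual.t2Space (R := ℝ)
  obtain ⟨c, hc, hAc⟩ := exists_mem_Ico_forall_ge_apply_eq_zero hT hg hg_top hA hδ
  obtain ⟨f, hf⟩ := SeparatingDual.exists_eq_one (R := ℝ) (hg_ne c hc.2)
  obtain ⟨b, hb, hfA⟩ := exists_mem_Ico_forall_ge_apply_eq_zero hT hg hg_top (hA.insert f) hc.2
  have hclosed : IsClosed {q : E | ∀ a ∈ A, a q = 0} := by
    simp only [ofPred_forall]
    exact isClosed_biInter fun a _ => isClosed_eq a.continuous continuous_const
  have hgc : g c ∈ arcHull g δ ⊤ ∩ {q | ∀ a ∈ A, a q = 0} :=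
    ⟨mem_arcHull ⟨hc.1, le_top⟩, hAc c le_rfl⟩
  obtain ⟨z, ⟨hz, hzA⟩, hz_max⟩ := ((isCompact_arcHull hg_compact δ ⊤).inter_right
    hclosed).exists_isMaxOn ⟨g c, hgc⟩ f.continuous.continuousOn
  have hfz : 1 ≤ f z := hf ▸ hz_max hgc
  refine ⟨f, z, hz, hzA, fun q hq hqA hfq => mem_boundedArcHull.2 ⟨b, hb.2, ?_⟩⟩
  obtain ⟨k, hk, m, hm, α, β, hα, hβ, hαβ, rfl⟩ := mem_convexJoin.1
    (arcHull_subset_convexJoin hg_compact (hc.1.trans hb.1) le_top hq)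
  have hm_apply : ∀ a ∈ insert f A, a (α • k + β • m) = α * a k := fun a ha => by
    rw [map_add, map_smul, map_smul, apply_eq_of_mem_arcHull a (fun ξ hξ => hfA ξ hξ.1 a ha) hm,
      smul_zero, add_zero, smul_eq_mul]
  rw [hm_apply f (mem_insert _ _)] at hfq
  have hα_ne : α ≠ 0 := by
    rintro rfl
    linarith
  have hkA : ∀ a ∈ A, a k = 0 := fun a ha => by
    simpa [hm_apply a (mem_insert_of_mem _ ha), hα_ne] using hqA a ha
  have hfk : f k ≤ f z := hz_max ⟨arcHull_mono le_rfl le_top hk, hkA⟩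
  have hα_eq : α = 1 := by nlinarith
  have hβ_eq : β = 0 := by linarith
  simpa only [hα_eq, hβ_eq, one_smul, zero_smul, add_zero] using hk

/-- Otherwise `𝔰.inducedSet ∩ boundedArcHull g δ` would be a countably closed set with `0` in its
closure. -/
lemma zero_notMem_inducedSet (hT : ℵ₀ < Order.cof (Iio (⊤ : T)))
    (hg : Continuous g) (hg_top : g ⊤ = 0) (hg_ne : ∀ ξ < ⊤, g ξ ≠ 0)
    (hg_compact : IsCompact (closedConvexHull ℝ (range g))) {δ : T} (hδ : δ < ⊤)
    (hδ0 : 0 ∉ boundedArcHull g δ) {L : Set E} (hL : IsCompact L) {V : Type*} [TopologicalSpace V]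
    [FirstCountableTopology V] [T2Space V] {π : E → V} (hπ : Continuous π) {v : V}
    (hLπ : L ∩ π ⁻¹' {v} = arcHull g δ ⊤) (𝔰 : RetractionalSkeleton L) {o : L} (ho : (o : E) = 0) :
    o ∉ 𝔰.inducedSet := by
  have : T2Space E := SeparatingDual.t2Space (R := ℝ)
  have : CompactSpace L := isCompact_iff_compactSpace.1 hL
  let A : Set L := 𝔰.inducedSet ∩ (↑) ⁻¹' boundedArcHull g δ
  have hA : IsCountablyClosed A := RetractionalSkeleton.isCountablyClosed_inducedSet.inter
    ((isCountablyClosed_boundedArcHull hT).preimage continuous_subtype_val)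
  suffices hoA : o ∈ closure A from fun hoD => hδ0 <|
    ho ▸ (RetractionalSkeleton.mem_of_mem_closure inter_subset_left hA hoD hoA).2
  refine mem_closure_iff_nhds.2 fun N hN => ?_
  obtain ⟨U, hU, hUN⟩ := mem_nhds_subtype _ _ _ |>.1 hN
  obtain ⟨F, hF⟩ := exists_finset_forall_eq_zero_imp_mem hL (ho ▸ hU)
  obtain ⟨f, z, hz, hzF, hpeak⟩ := exists_forall_eq_imp_mem_boundedArcHull hT hg hg_top hg_ne
    hg_compact hδ F.countable_toSet
  have hzL : z ∈ L ∩ π ⁻¹' {v} := hLπ ▸ hz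
  obtain ⟨w, hwD, hw⟩ := 𝔰.exists_mem_inducedSet_eq
    (φ := fun q => (π q, f q, fun a : F => a.1 (q : E))) (by fun_prop) ⟨z, hzL.1⟩
  obtain ⟨hwπ, hwf, hwF⟩ := by simpa only [Prod.ext_iff] using hw
  have hwF0 : ∀ a ∈ F, a (w : E) = 0 := fun a ha => (congrFun hwF ⟨a, ha⟩).trans (hzF a ha)
  have hw_arc : (w : E) ∈ arcHull g δ ⊤ := hLπ ▸ ⟨w.2, hwπ.trans hzL.2⟩
  exact ⟨w, hUN (hF w w.2 hwF0), hwD, hpeak w hw_arc hwF0 hwf⟩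

end SeparatingDual

/-! ### Joining a hull to a parabolic region -/

/-- The compact convex region above the parabola `y = x ^ 2`. It is truncated at height `1 / 4`
so that `x • p + y • q` stays in every absolutely convex set containing `p` and `q`. -/
def parabolicRegion : Set (ℝ × ℝ) := {c | c.1 ^ 2 ≤ c.2 ∧ c.2 ≤ 1 / 4}

lemma mk_sq_mem_parabolicRegion {a : ℝ} (h0 : 0 ≤ a) (h : a ≤ 1 / 2) :
    (a, a ^ 2) ∈ parabolicRegion := ⟨le_rfl, by dsimp only; nlinarith⟩

lemma norm_two_mul_le_one_of_mem_parabolicRegion {c : ℝ × ℝ} (hc : c ∈ parabolicRegion) :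
    ‖2 * c.1‖ ≤ 1 ∧ ‖2 * c.2‖ ≤ 1 := by
  obtain ⟨h₁, h₂⟩ := hc
  simp only [Real.norm_eq_abs, abs_le]
  refine ⟨⟨?_, ?_⟩, ?_, ?_⟩ <;> nlinarith

lemma convex_parabolicRegion : Convex ℝ parabolicRegion := by
  have hepi : Convex ℝ {c : ℝ × ℝ | c.1 ∈ univ ∧ c.1 ^ 2 ≤ c.2} :=
    (even_two.convexOn_pow (𝕜 := ℝ)).convex_epigraph
  simp only [mem_univ, true_and] at hepi
  exact hepi.inter (convex_halfSpace_le (LinearMap.snd ℝ ℝ ℝ).isLinear _)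

lemma isCompact_parabolicRegion : IsCompact parabolicRegion := by
  refine (isCompact_closedBall (0 : ℝ × ℝ) 1).of_isClosed_subset ?_ fun c hc => ?_
  · exact (isClosed_le (continuous_fst.pow 2) continuous_snd).inter
      (isClosed_le continuous_snd continuous_const)
  · obtain ⟨h₁, h₂⟩ := norm_two_mul_le_one_of_mem_parabolicRegion hc
    rw [norm_mul, Real.norm_two] at h₁ h₂
    rw [mem_closedBall_zero_iff, Prod.norm_def]
    exact max_le (by linarith [norm_nonneg c.1]) (by linarith [norm_nonneg c.2])

lemma smul_add_smul_mem_of_mem_parabolicRegion {E : Type*} [AddCommGroup E] [Module ℝ E] {B : Set E}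
    (hB : AbsConvex ℝ B) {p q : E} (hp : p ∈ B) (hq : q ∈ B) {c : ℝ × ℝ}
    (hc : c ∈ parabolicRegion) : c.1 • p + c.2 • q ∈ B := by
  obtain ⟨h₁, h₂⟩ := norm_two_mul_le_one_of_mem_parabolicRegion hc
  obtain ⟨hbal, hconv⟩ := hB
  have hmem := hconv (hbal.smul_mem h₁ hp) (hbal.smul_mem h₂ hq)
    (show (0 : ℝ) ≤ 1 / 2 by norm_num) (show (0 : ℝ) ≤ 1 / 2 by norm_num) (by norm_num)
  simpa [smul_smul] using hmem

lemma eq_one_of_smul_eq_mk_sq {a β : ℝ} (ha : a ≠ 0) (hβ : β ∈ Icc 0 1) {c : ℝ × ℝ}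
    (hc : c ∈ parabolicRegion) (h : β • c = (a, a ^ 2)) : β = 1 := by
  obtain ⟨h₁, h₂⟩ : β * c.1 = a ∧ β * c.2 = a ^ 2 := Prod.ext_iff.1 h
  have hle : a ^ 2 ≤ β * a ^ 2 := calc
    a ^ 2 = β ^ 2 * c.1 ^ 2 := by rw [← h₁, mul_pow]
    _ ≤ β ^ 2 * c.2 := mul_le_mul_of_nonneg_left hc.1 (sq_nonneg β)
    _ = β * a ^ 2 := by rw [← h₂]; ring
  have ha_pos : 0 < a ^ 2 := by positivity
  exact le_antisymm hβ.2 (le_of_mul_le_mul_right (by rwa [one_mul]) ha_pos)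

section Join

variable {E V : Type*} [AddCommGroup E] [Module ℝ E] [AddCommGroup V] [Module ℝ V]
  {J : V →ₗ[ℝ] E} {π : E →ₗ[ℝ] V} {K : Set E} {C : Set V}

lemma exists_eq_of_mem_convexJoin_image (hπJ : ∀ c, π (J c) = c) (hπK : ∀ k ∈ K, π k = 0)
    {φ : E} (hφ : φ ∈ convexJoin ℝ K (J '' C)) :
    ∃ k ∈ K, ∃ c ∈ C, ∃ β ∈ Icc (0 : ℝ) 1, π φ = β • c ∧ φ = (1 - β) • k + J (β • c) := by
  obtain ⟨k, hk, _, ⟨c, hc, rfl⟩, hφ⟩ := mem_convexJoin.1 hφ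
  rw [segment_eq_image] at hφ
  obtain ⟨β, hβ, rfl⟩ := hφ
  refine ⟨k, hk, c, hc, β, hβ, ?_, by rw [map_smul]⟩
  rw [map_add, map_smul, map_smul, hπK k hk, hπJ, smul_zero, zero_add]

lemma convexJoin_image_inter_preimage_zero (hπJ : ∀ c, π (J c) = c) (hπK : ∀ k ∈ K, π k = 0)
    (hK : Convex ℝ K) (h0 : 0 ∈ K) (hC : C.Nonempty) :
    convexJoin ℝ K (J '' C) ∩ π ⁻¹' {0} = K := by
  refine subset_antisymm ?_ fun k hk => ⟨subset_convexJoin_left (hC.image J) hk, hπK k hk⟩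
  rintro φ ⟨hφ, hπφ⟩
  obtain ⟨k, hk, c, -, β, hβ, hπ_eq, rfl⟩ := exists_eq_of_mem_convexJoin_image hπJ hπK hφ
  rw [← hπ_eq, mem_singleton_iff.1 hπφ, map_zero, add_zero]
  exact hK.smul_mem_of_zero_mem h0 hk ⟨sub_nonneg.2 hβ.2, sub_le_self _ hβ.1⟩

lemma eq_of_mem_convexJoin_image (hπJ : ∀ c, π (J c) = c) (hπK : ∀ k ∈ K, π k = 0) {c₀ : V}
    (hc₀ : ∀ c ∈ C, ∀ β ∈ Icc (0 : ℝ) 1, β • c = c₀ → β = 1) {φ : E}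
    (hφ : φ ∈ convexJoin ℝ K (J '' C)) (hπφ : π φ = c₀) : φ = J c₀ := by
  obtain ⟨k, -, c, hc, β, hβ, hπ_eq, hφ_eq⟩ := exists_eq_of_mem_convexJoin_image hπJ hπK hφ
  rw [hφ_eq, ← hπ_eq, hπφ, hc₀ c hc β hβ (hπ_eq.symm.trans hπφ), sub_self, zero_smul, zero_add]

end Join

section NoSkeleton

variable {E : Type u} [AddCommGroup E] [Module ℝ E] [TopologicalSpace E]

/-- The points `J (a, a ^ 2)` with `a ≠ 0` are level sets of `π` in the join, so they lie in the
induced set, and they converge to `0` as `a → 0`. -/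
lemma mem_inducedSet_of_coe_eq_zero [T2Space E] {K : Set E} (h0 : 0 ∈ K)
    {J : ℝ × ℝ →L[ℝ] E} {π : E →L[ℝ] ℝ × ℝ}
    (hπJ : ∀ c, π (J c) = c) (hπK : ∀ k ∈ K, π k = 0)
    (𝔰 : RetractionalSkeleton (convexJoin ℝ K (J '' parabolicRegion)))
    {o : convexJoin ℝ K (J '' parabolicRegion)} (ho : (o : E) = 0) : o ∈ 𝔰.inducedSet := by
  obtain ⟨a, -, ha, ha_lim⟩ := exists_seq_strictAnti_tendsto' (show (0 : ℝ) < 1 / 2 by norm_num)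
  have hmem : ∀ n, J (a n, a n ^ 2) ∈ convexJoin ℝ K (J '' parabolicRegion) := fun n =>
    subset_convexJoin_right ⟨0, h0⟩ <|
      mem_image_of_mem J (mk_sq_mem_parabolicRegion (ha n).1.le (ha n).2.le)
  refine RetractionalSkeleton.isCountablyClosed_inducedSet.mem_of_tendsto (l := atTop)
    (x := fun n => ⟨J (a n, a n ^ 2), hmem n⟩) (fun n => ?_) ?_
  · obtain ⟨w, hwD, hw⟩ := 𝔰.exists_mem_inducedSet_eq (φ := fun q => π q) (by fun_prop)
      ⟨J (a n, a n ^ 2), hmem n⟩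
    have hw_eq : (w : E) = J (a n, a n ^ 2) :=
      eq_of_mem_convexJoin_image (J := J.toLinearMap) (π := π.toLinearMap) hπJ hπK
        (fun c hc β hβ => eq_one_of_smul_eq_mk_sq (ha n).1.ne' hβ hc) w.2 (hw.trans (hπJ _))
    exact (Subtype.ext hw_eq : w = ⟨J (a n, a n ^ 2), hmem n⟩) ▸ hwD
  · have hcont : Continuous fun x : ℝ => J (x, x ^ 2) := by fun_prop
    have hJ0 : J (0, 0 ^ 2) = 0 := by rw [zero_pow two_ne_zero, Prod.mk_zero_zero, map_zero]
    rw [tendsto_subtype_rng, ho, ← hJ0]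
    exact (hcont.tendsto 0).comp ha_lim

variable [SeparatingDual ℝ E] {T : Type*} [LinearOrder T] [OrderTop T] [TopologicalSpace T]
  [OrderTopology T] {g : T → E}

lemma exists_biorthogonal [ContinuousAdd E] [ContinuousSMul ℝ E]
    (hT : ℵ₀ < Order.cof (Iio (⊤ : T))) (hg : Continuous g) (hg_top : g ⊤ = 0)
    (hg_ne : ∀ ξ < ⊤, g ξ ≠ 0) {i : T} (hi : i < ⊤) :
    ∃ j ∈ Ico i ⊤, ∃ (J : ℝ × ℝ →L[ℝ] E) (π : E →L[ℝ] ℝ × ℝ),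
      (∀ c, J c = c.1 • g i + c.2 • g j) ∧ (∀ c, π (J c) = c) ∧
      ∃ b ∈ Ico j ⊤, ∀ ξ ≥ b, π (g ξ) = 0 := by
  obtain ⟨x, hxi⟩ := SeparatingDual.exists_eq_one (R := ℝ) (hg_ne i hi)
  obtain ⟨j, hj, hx⟩ :=
    exists_mem_Ico_forall_ge_apply_eq_zero hT hg hg_top (countable_singleton x) hi
  have hxj : x (g j) = 0 := hx j le_rfl x rfl
  obtain ⟨y, hyi, hyj⟩ : ∃ y : StrongDual ℝ E, y (g i) = 0 ∧ y (g j) = 1 := by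
    obtain ⟨y, hy⟩ := SeparatingDual.exists_eq_one (R := ℝ) (hg_ne j hj.2)
    exact ⟨y - y (g i) • x, by simp [hxi], by simp [hxj, hy]⟩
  obtain ⟨b, hb, hxy⟩ := exists_mem_Ico_forall_ge_apply_eq_zero hT hg hg_top
    ((countable_singleton y).insert x) hj.2
  refine ⟨j, hj, (ContinuousLinearMap.toSpanSingleton ℝ (g i)).coprod (.toSpanSingleton ℝ (g j)),
    x.prod y, fun c => rfl, fun c => ?_, b, hb, fun ξ hξ => ?_⟩
  · simp [hxi, hxj, hyi, hyj]
  · simp [hxy ξ hξ]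

lemma not_hasRetractionalSkeleton_convexJoin [ContinuousAdd E] [ContinuousSMul ℝ E]
    (hT : ℵ₀ < Order.cof (Iio (⊤ : T))) (hg : Continuous g) (hg_top : g ⊤ = 0)
    (hg_ne : ∀ ξ < ⊤, g ξ ≠ 0) (hg_compact : IsCompact (closedConvexHull ℝ (range g)))
    {δ : T} (hδ : δ < ⊤) (hδ0 : 0 ∉ boundedArcHull g δ)
    {J : ℝ × ℝ →L[ℝ] E} {π : E →L[ℝ] ℝ × ℝ} (hπJ : ∀ c, π (J c) = c)
    (hπδ : ∀ ξ ≥ δ, π (g ξ) = 0) :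
    ¬ HasRetractionalSkeleton (convexJoin ℝ (arcHull g δ ⊤) (J '' parabolicRegion)) := by
  rintro ⟨𝔰⟩
  have : T2Space E := SeparatingDual.t2Space (R := ℝ)
  have hne : parabolicRegion.Nonempty := ⟨_, mk_sq_mem_parabolicRegion le_rfl (by norm_num)⟩
  have h0 : 0 ∈ arcHull g δ ⊤ := hg_top ▸ mem_arcHull ⟨le_top, le_rfl⟩
  have hπK : ∀ k ∈ arcHull g δ ⊤, π k = 0 := fun k =>
    apply_eq_of_mem_arcHull π fun ξ hξ => hπδ ξ hξ.1
  have hfiber : convexJoin ℝ (arcHull g δ ⊤) (J '' parabolicRegion) ∩ π ⁻¹' {0} = arcHull g δ ⊤ :=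
    convexJoin_image_inter_preimage_zero (J := J.toLinearMap) (π := π.toLinearMap) hπJ hπK
      convex_arcHull h0 hne
  have hcompact : IsCompact (convexJoin ℝ (arcHull g δ ⊤) (J '' parabolicRegion)) :=
    isCompact_convexJoin (isCompact_arcHull hg_compact δ ⊤)
      (isCompact_parabolicRegion.image J.continuous)
  exact zero_notMem_inducedSet hT hg hg_top hg_ne hg_compact hδ hδ0 hcompact π.continuous hfiber 𝔰
    (o := ⟨0, subset_convexJoin_left (hne.image J) h0⟩) rfl
    (mem_inducedSet_of_coe_eq_zero h0 hπJ hπK 𝔰 rfl)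

theorem exists_compact_convex_subset_not_hasRetractionalSkeleton [WellFoundedLT T]
    [ContinuousAdd E] [ContinuousSMul ℝ E]
    (hT : ℵ₀ < Order.cof (Iio (⊤ : T))) (hg : Continuous g) (hg_top : g ⊤ = 0)
    (hg_ne : ∀ ξ < ⊤, g ξ ≠ 0) {B : Set E} (hB : IsCompact B) (hB_abs : AbsConvex ℝ B)
    (hgB : ∀ ξ, g ξ ∈ B) (e : StrongDual ℝ E) :
    ∃ L ⊆ B, IsCompact L ∧ Convex ℝ L ∧ (∀ φ ∈ L, e φ = 0) ∧ ¬ HasRetractionalSkeleton L := by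
  have : T2Space E := SeparatingDual.t2Space (R := ℝ)
  have hg_compact : IsCompact (closedConvexHull ℝ (range g)) := hB.of_isClosed_subset
    isClosed_closedConvexHull (closedConvexHull_min (range_subset_iff.2 hgB) hB_abs.2 hB.isClosed)
  obtain ⟨a, ha, -⟩ := exists_lt_top_forall_lt hT countable_empty (by simp)
  obtain ⟨i, hi, he⟩ :=
    exists_mem_Ico_forall_ge_apply_eq_zero hT hg hg_top (countable_singleton e) ha
  obtain ⟨j, hj, J, π, hJ, hπJ, b, hb, hπ⟩ := exists_biorthogonal hT hg hg_top hg_ne hi.2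
  obtain ⟨δ, hδ, hδ0⟩ := exists_zero_notMem_boundedArcHull hT hg hg_ne hb.2
  have hgBe : ∀ ξ ≥ i, g ξ ∈ B ∩ {φ | e φ = 0} := fun ξ hξ => ⟨hgB ξ, he ξ hξ e rfl⟩
  have hJBe : ∀ c ∈ parabolicRegion, J c ∈ B ∩ {φ | e φ = 0} := fun c hc => by
    rw [hJ]
    refine ⟨smul_add_smul_mem_of_mem_parabolicRegion hB_abs (hgB i) (hgB j) hc, ?_⟩
    simp [he i le_rfl e rfl, he j hj.1 e rfl]
  have hBe : Convex ℝ (B ∩ {φ | e φ = 0}) := hB_abs.2.inter (convex_hyperplane e.isLinear 0)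
  have hBe_closed : IsClosed (B ∩ {φ | e φ = 0}) :=
    hB.isClosed.inter (isClosed_eq e.continuous continuous_const)
  have hiδ : i ≤ δ := hj.1.trans (hb.1.trans hδ.1)
  have hL := convexJoin_subset
    (arcHull_subset (a := δ) (b := ⊤) hBe hBe_closed fun ξ hξ => hgBe ξ (hiδ.trans hξ.1))
    (image_subset_iff.2 hJBe) hBe
  exact ⟨_, fun φ hφ => (hL hφ).1,
    isCompact_convexJoin (isCompact_arcHull hg_compact δ ⊤)
      (isCompact_parabolicRegion.image J.continuous),
    convex_arcHull.convexJoin (convex_parabolicRegion.linear_image J.toLinearMap),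
    fun φ hφ => (hL hφ).2,
    not_hasRetractionalSkeleton_convexJoin hT hg hg_top hg_ne hg_compact hδ.2 hδ0 hπJ
      fun ξ hξ => hπ ξ (hδ.1.trans hξ)⟩

end NoSkeleton

/-! ### Weak* duals -/

section WeakDual

variable {X : Type u} [NormedAddCommGroup X] [NormedSpace ℝ X]

/-- The evaluation at `x`, as a weak* continuous functional on the dual of `X`. -/
noncomputable def weakDualEval (x : X) : StrongDual ℝ (WeakDual ℝ X) where
  toFun φ := φ x
  map_add' _ _ := rfl
  map_smul' _ _ := rfl
  cont := WeakDual.eval_continuous x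

instance : SeparatingDual ℝ (WeakDual ℝ X) where
  exists_ne_zero' φ hφ := by
    obtain ⟨x, hx⟩ := DFunLike.ne_iff.1 hφ
    exact ⟨weakDualEval x, hx⟩

lemma setOf_forall_abs_apply_le_eq_preimage_closedBall {ε : ℝ} (hε : 0 ≤ ε) :
    {φ : WeakDual ℝ X | ∀ x, |φ x| ≤ ε * ‖x‖} =
      WeakDual.toStrongDual ⁻¹' Metric.closedBall (0 : StrongDual ℝ X) ε := by
  ext φ
  simp only [mem_ofPred_eq, mem_preimage, mem_closedBall_zero_iff]
  rw [ContinuousLinearMap.opNorm_le_iff hε]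
  rfl

lemma absConvex_preimage_toStrongDual_closedBall_zero (ε : ℝ) :
    AbsConvex ℝ (WeakDual.toStrongDual ⁻¹' Metric.closedBall (0 : StrongDual ℝ X) ε) :=
  ⟨balanced_iff_smul_mem.2 fun _ ha _ hφ => balanced_closedBall_zero.smul_mem ha hφ,
    (convex_closedBall _ _).is_linear_preimage (f := WeakDual.toStrongDual) ⟨map_add _, map_smul _⟩⟩

theorem exists_compact_convex_without_retractionalSkeleton_general {T : Type*} [LinearOrder T]
    [OrderTop T] [WellFoundedLT T] [TopologicalSpace T] [OrderTopology T]
    (hT : ℵ₀ < Order.cof (Iio (⊤ : T))) {f : T → WeakDual ℝ X} (hf : Continuous f)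
    (hf_mem : ∀ ξ, f ξ ∈ dualBall X) (hf_ne : ∀ ξ < ⊤, f ξ ≠ f ⊤) (e : X) {ε : ℝ} (hε : 0 < ε) :
    ∃ L : Set (WeakDual ℝ X), IsCompact L ∧ Convex ℝ L ∧
      (∀ φ ∈ L, φ e = 0 ∧ ∀ x : X, |φ x| ≤ ε * ‖x‖) ∧
      ¬ HasRetractionalSkeleton ↥L := by
  let g : T → WeakDual ℝ X := fun ξ => (ε / 2) • (f ξ - f ⊤)
  have hball := setOf_forall_abs_apply_le_eq_preimage_closedBall (X := X) hε.le
  have hg_mem : ∀ ξ, g ξ ∈ {φ : WeakDual ℝ X | ∀ x, |φ x| ≤ ε * ‖x‖} := fun ξ x => calc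
    |g ξ x| = ε / 2 * |f ξ x - f ⊤ x| := by
      rw [show g ξ x = ε / 2 * (f ξ x - f ⊤ x) from rfl, abs_mul, abs_of_pos (half_pos hε)]
    _ ≤ ε / 2 * (‖x‖ + ‖x‖) := by
      gcongr
      exact (abs_sub _ _).trans (add_le_add (hf_mem ξ x) (hf_mem ⊤ x))
    _ = ε * ‖x‖ := by ring
  rw [hball] at hg_mem
  obtain ⟨L, hLB, hL, hL_conv, hLe, hL_skel⟩ :=
    exists_compact_convex_subset_not_hasRetractionalSkeleton (g := g) hT (by fun_prop)
      (by simp only [g, sub_self, smul_zero])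
      (fun ξ hξ => smul_ne_zero (half_pos hε).ne' (sub_ne_zero.2 (hf_ne ξ hξ)))
      (WeakDual.isCompact_closedBall 0 ε) (absConvex_preimage_toStrongDual_closedBall_zero ε)
      hg_mem (weakDualEval e)
  exact ⟨L, hL, hL_conv, fun φ hφ => ⟨hLe φ hφ, hball.superset (hLB hφ)⟩, hL_skel⟩

end WeakDual

/-- If `[0, ω₁]` embeds homeomorphically into `(B_{X*}, w*)`, then for every `e ∈ X` and
`ε > 0` there exists a weak*-compact convex set
`L ⊆ {x* : x*(e) = 0} ∩ ε B_{X*}` without a retractional skeleton. -/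
theorem exists_compact_convex_without_retractionalSkeleton (X : Type u)
    [NormedAddCommGroup X] [NormedSpace ℝ X] [CompleteSpace X]
    (hemb : ∃ f : OrdinalSegmentOmega1 → ↥(dualBall X), Topology.IsEmbedding f)
    (e : X) (ε : ℝ) (hε : 0 < ε) :
    ∃ L : Set (WeakDual ℝ X), IsCompact L ∧ Convex ℝ L ∧
      (∀ φ ∈ L, φ e = 0 ∧ ∀ x : X, |φ x| ≤ ε * ‖x‖) ∧
      ¬ HasRetractionalSkeleton ↥L := by
  obtain ⟨f, hf⟩ := hemb
  have : OrderTopology OrdinalSegmentOmega1 := orderTopology_of_ordConnected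
  exact exists_compact_convex_without_retractionalSkeleton_general
    aleph0_lt_cof_Iio_top_ordinalSegmentOmega1 (continuous_subtype_val.comp hf.continuous)
    (fun ξ => (f ξ).2) (fun ξ hξ h => hξ.ne (hf.injective (Subtype.ext h))) e hε
end
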